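/- arXiv:math/0509720 — 6 statements merged into one kernel-verified Lean document; each statement's English description precedes it below -/
import Mathlib

section
/- Fix n ≥ 1 and a point w' = (x',y') ∈ ℝ^{n+1}×ℝ^n. The function (t,w) ↦ q^n_t(w, w'), defined for t > 0 and w = (x,y) ∈ ℝ^{n+1}×ℝ^n ≅ ℝ^{2n+1}, is smooth and satisfies the heat equation (1/2) Σ_{i=1}^{2n+1} ∂²q^n_t/∂w_i²(w, w') = ∂q^n_t/∂t(w, w') on (0,∞)×ℝ^{2n+1}. -/
open MeasureTheory Real

/-- The centered Gaussian density with variance `t`. -/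
noncomputable def gauss (t y : ℝ) : ℝ :=
  (Real.sqrt (2 * Real.pi * t))⁻¹ * Real.exp (-y ^ 2 / (2 * t))

/-- The Gaussian cumulative distribution function `Φ_t`. -/
noncomputable def gaussCDF (t y : ℝ) : ℝ := ∫ z in Set.Iic y, gauss t z

/-- The derivative `φ'_t` of the Gaussian density. -/
noncomputable def gaussDeriv (t y : ℝ) : ℝ :=
  -y / Real.sqrt (2 * Real.pi * t ^ 3) * Real.exp (-y ^ 2 / (2 * t))

/-- The kernel `q^n_t((x,y),(x',y'))`, a `(2n+1)×(2n+1)` block determinant. -/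
noncomputable def qKer (n : ℕ) (t : ℝ) (x x' : Fin (n + 1) → ℝ) (y y' : Fin n → ℝ) : ℝ :=
  Matrix.det (Matrix.fromBlocks
    (Matrix.of fun i j : Fin (n + 1) => gauss t (x' j - x i))
    (Matrix.of fun (i : Fin (n + 1)) (j : Fin n) =>
      gaussCDF t (y' j - x i) - (if (i : ℕ) ≤ (j : ℕ) then (1 : ℝ) else 0))
    (Matrix.of fun (i : Fin n) (j : Fin (n + 1)) => gaussDeriv t (x' j - y i))
    (Matrix.of fun i j : Fin n => gauss t (y' j - y i)))

/-- Heat-equation solution bundle. -/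
def IsHeat (f : ℝ → ℝ → ℝ) : Prop :=
  ContDiffOn ℝ (⊤ : ℕ∞) (fun p : ℝ × ℝ => f p.1 p.2) {p : ℝ × ℝ | 0 < p.1} ∧
  ∃ f1 f2 : ℝ → ℝ → ℝ, ∀ t, 0 < t → ∀ a, HasDerivAt (f t) (f1 t a) a ∧
    HasDerivAt (f1 t) (f2 t a) a ∧ HasDerivAt (fun s => f s a) (f2 t a / 2) t

lemma IsHeat.reflect {f : ℝ → ℝ → ℝ} (h : IsHeat f) (c : ℝ) :
    IsHeat (fun t a => f t (c - a)) := by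
  obtain ⟨hs, f1, f2, hd⟩ := h
  refine ⟨?_, fun t a => - f1 t (c - a), fun t a => f2 t (c - a), fun t ht a => ⟨?_, ?_, ?_⟩⟩
  · have : ContDiffOn ℝ (⊤ : ℕ∞) (fun p : ℝ × ℝ => ((p.1, c - p.2) : ℝ × ℝ))
        {p : ℝ × ℝ | 0 < p.1} := by
      apply ContDiff.contDiffOn; fun_prop
    exact hs.comp this (fun p hp => hp)
  · have := (hd t ht (c - a)).1.comp a ((hasDerivAt_id a).const_sub c)
    simpa [Function.comp_def] using this
  · have := ((hd t ht (c - a)).2.1.comp a ((hasDerivAt_id a).const_sub c)).neg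
    exact this.congr_deriv (by simp)
  · exact (hd t ht (c - a)).2.2

lemma IsHeat.sub_const {f : ℝ → ℝ → ℝ} (h : IsHeat f) (c : ℝ) :
    IsHeat (fun t a => f t a - c) := by
  obtain ⟨hs, f1, f2, hd⟩ := h
  exact ⟨hs.sub contDiffOn_const, f1, f2, fun t ht a =>
    ⟨(hd t ht a).1.sub_const c, (hd t ht a).2.1, (hd t ht a).2.2.sub_const c⟩⟩

lemma gauss_contDiff : ContDiffOn ℝ (⊤ : ℕ∞) (fun p : ℝ × ℝ => gauss p.1 p.2)
    {p : ℝ × ℝ | 0 < p.1} := by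
  unfold gauss
  have h1 : ContDiffOn ℝ (⊤ : ℕ∞) (fun p : ℝ × ℝ => 2 * Real.pi * p.1) {p : ℝ × ℝ | 0 < p.1} := by
    apply ContDiff.contDiffOn; fun_prop
  have hp : ∀ p ∈ {p : ℝ × ℝ | 0 < p.1}, 0 < 2 * Real.pi * p.1 := by
    intro p hp
    have : 0 < p.1 := hp
    positivity
  refine ContDiffOn.mul ((h1.sqrt fun p h => (hp p h).ne').inv
    fun p h => (Real.sqrt_pos.2 (hp p h)).ne') (ContDiffOn.exp (ContDiffOn.div ?_ ?_ ?_))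
  · apply ContDiff.contDiffOn; fun_prop
  · apply ContDiff.contDiffOn; fun_prop
  · intro p hp
    have : 0 < p.1 := hp
    positivity

lemma gauss_dy (t y : ℝ) (ht : 0 < t) : HasDerivAt (gauss t) (-y / t * gauss t y) y := by
  unfold gauss
  have h : HasDerivAt (fun y : ℝ => -y ^ 2 / (2 * t)) (-(2 * y) / (2 * t)) y := by
    simpa using ((hasDerivAt_pow 2 y).neg.div_const (2 * t))
  refine HasDerivAt.congr_deriv ((h.exp.const_mul (Real.sqrt (2 * Real.pi * t))⁻¹)) ?_
  field_simp

lemma gauss_dt (t y : ℝ) (ht : 0 < t) :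
    HasDerivAt (fun s => gauss s y) ((y ^ 2 / (2 * t ^ 2) - 1 / (2 * t)) * gauss t y) t := by
  unfold gauss
  have h : HasDerivAt (fun s : ℝ => -y ^ 2 / (2 * s)) (y ^ 2 / (2 * t ^ 2)) t := by
    refine HasDerivAt.congr_deriv ((hasDerivAt_const t (-y ^ 2)).div ((hasDerivAt_id t).const_mul 2) (by simp; positivity)) ?_
    simp; field_simp
  have hpos : 0 < 2 * Real.pi * t := by positivity
  have h0 : HasDerivAt (fun s : ℝ => 2 * Real.pi * s) (2 * Real.pi) t := by
    simpa using (hasDerivAt_id t).const_mul (2 * Real.pi)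
  have hs : 0 < Real.sqrt (2 * Real.pi * t) := Real.sqrt_pos.2 hpos
  have h2 := (h0.sqrt hpos.ne').inv hs.ne'
  refine HasDerivAt.congr_deriv (h2.mul h.exp) ?_
  have e : Real.sqrt (2 * Real.pi * t) ^ 2 = 2 * Real.pi * t := Real.sq_sqrt hpos.le
  simp only [Pi.inv_apply]
  rw [e]
  field_simp
  ring

lemma gauss_heat : IsHeat gauss := by
  refine ⟨gauss_contDiff, fun t y => -y / t * gauss t y,
    fun t y => (y ^ 2 / t ^ 2 - 1 / t) * gauss t y, fun t ht y => ⟨gauss_dy t y ht, ?_, ?_⟩⟩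
  · refine HasDerivAt.congr_deriv (((hasDerivAt_id y).neg.div_const t).mul (gauss_dy t y ht)) ?_
    simp; field_simp; ring
  · refine HasDerivAt.congr_deriv (gauss_dt t y ht) ?_
    field_simp

lemma gaussDeriv_eq (t y : ℝ) (ht : 0 < t) : gaussDeriv t y = -y / t * gauss t y := by
  unfold gaussDeriv gauss
  have : Real.sqrt (2 * Real.pi * t ^ 3) = t * Real.sqrt (2 * Real.pi * t) := by
    rw [show 2 * Real.pi * t ^ 3 = t ^ 2 * (2 * Real.pi * t) by ring,
      Real.sqrt_mul (by positivity), Real.sqrt_sq ht.le]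
  rw [this]
  have hs : 0 < Real.sqrt (2 * Real.pi * t) := Real.sqrt_pos.2 (by positivity)
  field_simp

lemma IsHeat.congr {f g : ℝ → ℝ → ℝ} (h : IsHeat f) (e : ∀ t, 0 < t → ∀ a, g t a = f t a) :
    IsHeat g := by
  obtain ⟨hs, f1, f2, hd⟩ := h
  refine ⟨hs.congr fun p hp => e p.1 hp p.2, f1, f2, fun t ht a => ⟨?_, (hd t ht a).2.1, ?_⟩⟩
  · rw [show g t = f t from funext (e t ht)]
    exact (hd t ht a).1
  · refine (hd t ht a).2.2.congr_of_eventuallyEq ?_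
    filter_upwards [lt_mem_nhds ht] with s hs using e s hs a

lemma gaussDeriv_heat : IsHeat gaussDeriv := by
  refine IsHeat.congr (f := fun t y => -y / t * gauss t y) ?_ (fun t ht a => gaussDeriv_eq t a ht)
  refine ⟨?_, fun t y => (y ^ 2 / t ^ 2 - 1 / t) * gauss t y,
    fun t y => (3 * y / t ^ 2 - y ^ 3 / t ^ 3) * gauss t y, fun t ht y => ⟨?_, ?_, ?_⟩⟩
  · refine ContDiffOn.mul (ContDiffOn.div ?_ ?_ ?_) gauss_contDiff
    · apply ContDiff.contDiffOn; fun_prop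
    · apply ContDiff.contDiffOn; fun_prop
    · intro p hp
      exact (show 0 < p.1 from hp).ne'
  · refine HasDerivAt.congr_deriv (((hasDerivAt_id y).neg.div_const t).mul (gauss_dy t y ht)) ?_
    simp; field_simp; ring
  · refine HasDerivAt.congr_deriv ((((hasDerivAt_pow 2 y).div_const (t ^ 2)).sub_const (1 / t)).mul (gauss_dy t y ht)) ?_
    simp; field_simp; ring
  · refine HasDerivAt.congr_deriv (((hasDerivAt_const t (-y)).div (hasDerivAt_id t) ht.ne').mul (gauss_dt t y ht)) ?_
    simp; field_simp; ring

lemma gauss_cont (t : ℝ) : Continuous (gauss t) := by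
  unfold gauss; fun_prop

lemma gauss_int (t : ℝ) (ht : 0 < t) : Integrable (gauss t) := by
  unfold gauss
  have h := (integrable_exp_neg_mul_sq (b := 1 / (2 * t)) (by positivity)).const_mul
    (Real.sqrt (2 * Real.pi * t))⁻¹
  refine h.congr (Filter.Eventually.of_forall fun y => ?_)
  simp only
  congr 2
  field_simp

lemma cdf_dy (t y : ℝ) (ht : 0 < t) : HasDerivAt (gaussCDF t) (gauss t y) y := by
  have e : gaussCDF t = fun y => gaussCDF t 0 + ∫ z in (0:ℝ)..y, gauss t z := by
    funext y
    unfold gaussCDF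
    rw [← intervalIntegral.integral_Iic_sub_Iic (gauss_int t ht).integrableOn
      (gauss_int t ht).integrableOn]
    ring
  rw [e]
  exact (intervalIntegral.integral_hasDerivAt_right ((gauss_int t ht).intervalIntegrable)
    ((gauss_cont t).stronglyMeasurableAtFilter _ _) (gauss_cont t).continuousAt).const_add _

lemma gauss_scale (t y : ℝ) (ht : 0 < t) :
    gauss t y = (Real.sqrt t)⁻¹ * gauss 1 (y / Real.sqrt t) := by
  unfold gauss
  rw [div_pow, Real.sq_sqrt ht.le, Real.sqrt_mul (by positivity) t, mul_one, mul_inv]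
  have : -(y ^ 2 / t) / (2 * 1) = -y ^ 2 / (2 * t) := by field_simp
  rw [this]
  ring

lemma cdf_scale (t y : ℝ) (ht : 0 < t) : gaussCDF t y = gaussCDF 1 (y / Real.sqrt t) := by
  have hs : 0 < Real.sqrt t := Real.sqrt_pos.2 ht
  unfold gaussCDF
  rw [← integral_indicator measurableSet_Iic, ← integral_indicator measurableSet_Iic]
  have h := MeasureTheory.Measure.integral_comp_div
    ((Set.Iic (y / Real.sqrt t)).indicator (gauss 1)) (Real.sqrt t)
  have e : ∀ z, (Set.Iic y).indicator (gauss t) z =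
      (Real.sqrt t)⁻¹ * (Set.Iic (y / Real.sqrt t)).indicator (gauss 1) (z / Real.sqrt t) := by
    intro z
    by_cases hz : z ≤ y
    · rw [Set.indicator_of_mem (by simpa using hz), Set.indicator_of_mem, gauss_scale t z ht]
      exact div_le_div_of_nonneg_right hz hs.le
    · rw [Set.indicator_of_notMem (by simpa using hz), Set.indicator_of_notMem, mul_zero]
      simp only [Set.mem_Iic, not_le] at *
      exact div_lt_div_of_pos_right hz hs
  simp_rw [e]
  rw [integral_const_mul, h, abs_of_pos hs, smul_eq_mul, inv_mul_cancel_left₀ hs.ne']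

lemma cdf_one_contDiff : ContDiff ℝ (⊤ : ℕ∞) (gaussCDF 1) := by
  rw [contDiff_infty_iff_deriv]
  refine ⟨fun y => (cdf_dy 1 y one_pos).differentiableAt, ?_⟩
  rw [show deriv (gaussCDF 1) = gauss 1 from funext fun y => (cdf_dy 1 y one_pos).deriv]
  unfold gauss
  fun_prop

lemma gaussCDF_heat : IsHeat gaussCDF := by
  refine ⟨?_, gauss, fun t y => -y / t * gauss t y,
    fun t ht y => ⟨cdf_dy t y ht, gauss_dy t y ht, ?_⟩⟩
  · have h : ContDiffOn ℝ (⊤ : ℕ∞) (fun p : ℝ × ℝ => p.2 / Real.sqrt p.1)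
        {p : ℝ × ℝ | 0 < p.1} := by
      refine ContDiffOn.div (ContDiff.contDiffOn (by fun_prop))
        (ContDiffOn.sqrt (ContDiff.contDiffOn (by fun_prop)) ?_) ?_
      · intro p hp
        exact (show 0 < p.1 from hp).ne'
      · intro p hp
        exact (Real.sqrt_pos.2 (show 0 < p.1 from hp)).ne'
    exact (cdf_one_contDiff.comp_contDiffOn h).congr fun p hp => cdf_scale p.1 p.2 hp
  · have hs : 0 < Real.sqrt t := Real.sqrt_pos.2 ht
    have h1 : HasDerivAt (fun s => y / Real.sqrt s) _ t :=
      (hasDerivAt_const t y).div ((hasDerivAt_id t).sqrt ht.ne') hs.ne'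
    have h2 := (cdf_dy 1 (y / Real.sqrt t) one_pos).comp t h1
    have h3 : HasDerivAt (fun s => gaussCDF s y) _ t := h2.congr_of_eventuallyEq (by
      filter_upwards [lt_mem_nhds ht] with s hs using cdf_scale s y hs)
    refine HasDerivAt.congr_deriv (h3) ?_
    simp only [id]
    rw [gauss_scale t y ht]
    rw [Real.sq_sqrt ht.le]
    field_simp
    ring

section
variable {ι : Type*} [Fintype ι] [DecidableEq ι]

lemma det_rows (M : Matrix ι ι ℝ) :
    M.det = ∑ σ : Equiv.Perm ι, ((Equiv.Perm.sign σ : ℤ) : ℝ) * ∏ i, M i (σ i) := by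
  rw [← Matrix.det_transpose, Matrix.det_apply']
  rfl

lemma det_heat (f : ι → ι → ℝ → ℝ → ℝ) (hf : ∀ i j, IsHeat (f i j)) :
    ContDiffOn ℝ (⊤ : ℕ∞)
      (fun p : ℝ × (ι → ℝ) => Matrix.det (Matrix.of fun i j => f i j p.1 (p.2 i)))
      {p : ℝ × (ι → ℝ) | 0 < p.1} ∧
    ∀ (t : ℝ), 0 < t → ∀ w : ι → ℝ,
      (1 / 2 : ℝ) * ∑ i : ι,
          iteratedDeriv 2
            (fun a => Matrix.det (Matrix.of fun k j => f k j t (Function.update w i a k))) (w i)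
        = deriv (fun s => Matrix.det (Matrix.of fun i j => f i j s (w i))) t := by
  simp only [det_rows, Matrix.of_apply]
  constructor
  · refine ContDiffOn.sum fun σ _ => contDiffOn_const.mul (contDiffOn_prod fun i _ => ?_)
    have : ContDiffOn ℝ (⊤ : ℕ∞) (fun p : ℝ × (ι → ℝ) => ((p.1, p.2 i) : ℝ × ℝ))
        {p : ℝ × (ι → ℝ) | 0 < p.1} := by
      apply ContDiff.contDiffOn; fun_prop
    exact (hf i (σ i)).1.comp this (fun p hp => hp)
  · intro t ht w
    choose hs f1 f2 hd using hf
    have hR : HasDerivAt (fun s => ∑ σ : Equiv.Perm ι, ((Equiv.Perm.sign σ : ℤ) : ℝ) *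
        ∏ i, f i (σ i) s (w i)) (∑ σ : Equiv.Perm ι, ((Equiv.Perm.sign σ : ℤ) : ℝ) *
        ∑ i, (∏ j ∈ Finset.univ.erase i, f j (σ j) t (w j)) * (f2 i (σ i) t (w i) / 2)) t := by
      refine HasDerivAt.fun_sum fun σ _ => HasDerivAt.const_mul _ ?_
      exact HasDerivAt.fun_finsetProd fun i _ => (hd i (σ i) t ht (w i)).2.2
    have hL : ∀ i, iteratedDeriv 2 (fun a => ∑ σ : Equiv.Perm ι, ((Equiv.Perm.sign σ : ℤ) : ℝ) *
        ∏ k, f k (σ k) t (Function.update w i a k)) (w i) =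
        ∑ σ : Equiv.Perm ι, ((Equiv.Perm.sign σ : ℤ) : ℝ) *
        ((∏ j ∈ Finset.univ.erase i, f j (σ j) t (w j)) * f2 i (σ i) t (w i)) := by
      intro i
      have e : (fun a => ∑ σ : Equiv.Perm ι, ((Equiv.Perm.sign σ : ℤ) : ℝ) *
        ∏ k, f k (σ k) t (Function.update w i a k)) = fun a =>
        ∑ σ : Equiv.Perm ι, ((Equiv.Perm.sign σ : ℤ) : ℝ) *
        ((∏ j ∈ Finset.univ.erase i, f j (σ j) t (w j)) * f i (σ i) t a) := by
        funext a
        refine Finset.sum_congr rfl fun σ _ => ?_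
        rw [← Finset.prod_erase_mul _ _ (Finset.mem_univ i), Function.update_self]
        congr 2
        refine Finset.prod_congr rfl fun j hj => ?_
        rw [Function.update_of_ne (Finset.ne_of_mem_erase hj)]
      rw [e, iteratedDeriv_succ, iteratedDeriv_one]
      have e1 : deriv (fun a =>
        ∑ σ : Equiv.Perm ι, ((Equiv.Perm.sign σ : ℤ) : ℝ) *
        ((∏ j ∈ Finset.univ.erase i, f j (σ j) t (w j)) * f i (σ i) t a)) = fun a =>
        ∑ σ : Equiv.Perm ι, ((Equiv.Perm.sign σ : ℤ) : ℝ) *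
        ((∏ j ∈ Finset.univ.erase i, f j (σ j) t (w j)) * f1 i (σ i) t a) := by
        funext a
        exact (HasDerivAt.fun_sum fun σ _ => HasDerivAt.const_mul _ (HasDerivAt.const_mul _
          (hd i (σ i) t ht a).1)).deriv
      rw [e1]
      exact (HasDerivAt.fun_sum fun σ _ => HasDerivAt.const_mul _ (HasDerivAt.const_mul _
          (hd i (σ i) t ht (w i)).2.1)).deriv
    rw [hR.deriv]
    simp only [hL]
    rw [Finset.sum_comm, Finset.mul_sum]
    refine Finset.sum_congr rfl fun σ _ => ?_
    rw [← Finset.mul_sum, mul_left_comm, Finset.mul_sum]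
    congr 1
    refine Finset.sum_congr rfl fun i _ => ?_
    ring
end

/-- Entries of the block matrix. -/
noncomputable def entryF (n : ℕ) (x' : Fin (n + 1) → ℝ) (y' : Fin n → ℝ) :
    Fin (n + 1) ⊕ Fin n → Fin (n + 1) ⊕ Fin n → ℝ → ℝ → ℝ
  | .inl _, .inl j => fun t a => gauss t (x' j - a)
  | .inl i, .inr j => fun t a =>
      gaussCDF t (y' j - a) - (if (i : ℕ) ≤ (j : ℕ) then (1 : ℝ) else 0)
  | .inr _, .inl j => fun t a => gaussDeriv t (x' j - a)
  | .inr _, .inr j => fun t a => gauss t (y' j - a)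

lemma entryF_heat (n : ℕ) (x' : Fin (n + 1) → ℝ) (y' : Fin n → ℝ) (i j) :
    IsHeat (entryF n x' y' i j) := by
  rcases i with i | i <;> rcases j with j | j
  · exact gauss_heat.reflect _
  · exact (gaussCDF_heat.reflect _).sub_const _
  · exact gaussDeriv_heat.reflect _
  · exact gauss_heat.reflect _

lemma qKer_eq (n : ℕ) (x' : Fin (n + 1) → ℝ) (y' : Fin n → ℝ) (t : ℝ)
    (w : Fin (n + 1) ⊕ Fin n → ℝ) : qKer n t (w ∘ Sum.inl) x' (w ∘ Sum.inr) y' =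
      Matrix.det (Matrix.of fun i j => entryF n x' y' i j t (w i)) := by
  unfold qKer
  congr 1
  ext i j
  rcases i with i | i <;> rcases j with j | j <;> rfl

/-- For fixed `w' = (x',y')`, the map `(t,w) ↦ q^n_t(w,w')` is smooth on `(0,∞) × ℝ^{2n+1}`
and satisfies the heat equation
`(1/2) Σ_i ∂²q/∂w_i² = ∂q/∂t`. -/
theorem stmt0 (n : ℕ) (hn : 1 ≤ n) (x' : Fin (n + 1) → ℝ) (y' : Fin n → ℝ) :
    ContDiffOn ℝ (⊤ : ℕ∞)
      (fun p : ℝ × ((Fin (n + 1) ⊕ Fin n) → ℝ) =>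
        qKer n p.1 (p.2 ∘ Sum.inl) x' (p.2 ∘ Sum.inr) y')
      {p : ℝ × ((Fin (n + 1) ⊕ Fin n) → ℝ) | 0 < p.1} ∧
    ∀ (t : ℝ), 0 < t → ∀ w : (Fin (n + 1) ⊕ Fin n) → ℝ,
      (1 / 2 : ℝ) * ∑ i : Fin (n + 1) ⊕ Fin n,
          iteratedDeriv 2
            (fun a => qKer n t (Function.update w i a ∘ Sum.inl) x'
              (Function.update w i a ∘ Sum.inr) y') (w i)
        = deriv (fun s => qKer n s (w ∘ Sum.inl) x' (w ∘ Sum.inr) y') t := by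
  simp only [qKer_eq]
  exact det_heat _ (entryF_heat n x' y')
end

section
/- For every n ≥ 1 and every x ∈ W^{n+1}, the integral of the Vandermonde product over the interlacing region equals ∫_{W^n(x)} h_n(y) dy = h_{n+1}(x)/n!. In particular λ^n(x,·) = n! h_n(·)/h_{n+1}(x) is a probability density on W^n(x) whenever h_{n+1}(x) ≠ 0. -/
open MeasureTheory

/-- The Vandermonde product `h_m(z) = ∏_{i<j} (z_j − z_i)`. -/
noncomputable def vand (m : ℕ) (z : Fin m → ℝ) : ℝ :=
  ∏ j : Fin m, ∏ i ∈ Finset.Iio j, (z j - z i)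

/-- The interlacing region `W^n(x) = {y : x_1 ≤ y_1 ≤ x_2 ≤ … ≤ y_n ≤ x_{n+1}}`. -/
def WintAt (n : ℕ) (x : Fin (n + 1) → ℝ) : Set (Fin n → ℝ) :=
  {y | ∀ i : Fin n, x i.castSucc ≤ y i ∧ y i ≤ x i.succ}

lemma vand_eq_det (m : ℕ) (z : Fin m → ℝ) : vand m z = (Matrix.vandermonde z).det := by
  rw [Matrix.det_vandermonde, vand]
  apply Finset.prod_comm'
  intro i j
  simp

lemma det_diff (n : ℕ) (x : Fin (n + 1) → ℝ) :
    (Matrix.vandermonde x).det =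
      (Matrix.of fun i j : Fin n => x i.succ ^ ((j : ℕ) + 1) - x i.castSucc ^ ((j : ℕ) + 1)).det := by
  let B : Matrix (Fin (n+1)) (Fin (n+1)) ℝ := Matrix.of fun i j =>
    Fin.cases (x 0 ^ (j : ℕ)) (fun k : Fin n => x k.succ ^ (j : ℕ) - x k.castSucc ^ (j : ℕ)) i
  have h : (Matrix.vandermonde x).det = B.det := by
    apply Matrix.det_eq_of_forall_row_eq_smul_add_pred (fun _ => 1)
    · intro j
      simp [B, Matrix.vandermonde_apply]
    · intro i j
      simp [B, Matrix.vandermonde_apply]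
  rw [h, Matrix.det_succ_column_zero, Fin.sum_univ_succ]
  have h2 : ∀ i : Fin n, B i.succ 0 = 0 := by intro i; simp [B]
  have h3 : B 0 0 = 1 := by simp [B]
  simp only [h2, h3]
  simp
  congr 1

lemma int_vand (n : ℕ) (x : Fin (n + 1) → ℝ) (hx : Monotone x) :
    (∫ y in WintAt n x, vand n y) = vand (n + 1) x / (Nat.factorial n : ℝ) := by
  have hW : WintAt n x = Set.univ.pi fun i : Fin n => Set.Icc (x i.castSucc) (x i.succ) := by
    ext y; simp only [WintAt, Set.mem_pi, Set.mem_setOf_eq, Set.mem_univ, true_imp_iff, Set.mem_Icc]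
  have hle : ∀ i : Fin n, x i.castSucc ≤ x i.succ := fun i => hx (Fin.castSucc_lt_succ).le
  have h1 : ∀ i : Fin n, ∀ k : ℕ, ∫ t in Set.Icc (x i.castSucc) (x i.succ), t ^ k
      = (x i.succ ^ (k+1) - x i.castSucc ^ (k+1)) / ((k:ℝ)+1) := by
    intro i k
    rw [integral_Icc_eq_integral_Ioc, ← intervalIntegral.integral_of_le (hle i), integral_pow]
  have hint : ∀ i : Fin n, ∀ k : ℕ, Integrable (fun t : ℝ => t ^ k)
      (volume.restrict (Set.Icc (x i.castSucc) (x i.succ))) := fun i k =>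
    (continuous_pow k).continuousOn.integrableOn_Icc
  have hM : (∫ y in WintAt n x, vand n y) = (Matrix.of fun i j : Fin n =>
      (x i.succ ^ ((j : ℕ) + 1) - x i.castSucc ^ ((j : ℕ) + 1)) / (((j : ℕ) : ℝ) + 1)).det := by
    rw [hW, volume_pi, Measure.restrict_pi_pi]
    simp only [vand_eq_det]
    simp_rw [← Matrix.det_transpose (Matrix.vandermonde _)]
    rw [← Matrix.det_transpose]
    simp only [Matrix.det_apply', Matrix.transpose_apply, Matrix.vandermonde_apply, Matrix.of_apply]
    have key : ∀ (σ : Equiv.Perm (Fin n)) (y : Fin n → ℝ), 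
       ∏ i, y i ^ ((σ i : Fin n) : ℕ) = ∏ i, (fun i t => t ^ ((σ i : Fin n) : ℕ) : Fin n → ℝ → ℝ) i (y i) :=
      fun _ _ => rfl
    rw [integral_finsetSum]
    · refine Finset.sum_congr rfl fun σ _ => ?_
      rw [integral_const_mul]
      simp_rw [key]
      congr 1
      refine (integral_fintype_prod_eq_prod
        (μ := fun i : Fin n => volume.restrict (Set.Icc (x i.castSucc) (x i.succ)))
        (fun (i : Fin n) (t : ℝ) => t ^ ((σ i : Fin n) : ℕ))).trans ?_
      simp only [h1]
    · intro σ _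
      apply Integrable.const_mul
      simp_rw [key]
      exact Integrable.fintype_prod fun i => hint i _
  rw [hM, vand_eq_det, det_diff]
  have := Matrix.det_mul_row (fun j : Fin n => (((j : ℕ) : ℝ) + 1)⁻¹)
    (Matrix.of fun i j : Fin n => x i.succ ^ ((j : ℕ) + 1) - x i.castSucc ^ ((j : ℕ) + 1))
  have hf : ∏ j : Fin n, (((j : ℕ) : ℝ) + 1)⁻¹ = (Nat.factorial n : ℝ)⁻¹ := by
    rw [Finset.prod_inv_distrib, Fin.prod_univ_eq_prod_range (fun k => (k:ℝ)+1),
      ← Finset.prod_range_add_one_eq_factorial]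
    push_cast
    rfl
  rw [hf] at this
  rw [div_eq_inv_mul, ← this]
  congr 1
  ext i j
  simp [div_eq_inv_mul]

/-- `∫_{W^n(x)} h_n(y) dy = h_{n+1}(x)/n!`; in particular `λ^n(x,·) = n! h_n(·)/h_{n+1}(x)`
is a probability density on `W^n(x)` whenever `h_{n+1}(x) ≠ 0`. -/
theorem stmt7 (n : ℕ) (hn : 1 ≤ n) (x : Fin (n + 1) → ℝ) (hx : Monotone x) :
    (∫ y in WintAt n x, vand n y) = vand (n + 1) x / (Nat.factorial n : ℝ) ∧
    (vand (n + 1) x ≠ 0 →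
      (∫ y in WintAt n x, (Nat.factorial n : ℝ) * vand n y / vand (n + 1) x) = 1) := by
  refine ⟨int_vand n x hx, fun h => ?_⟩
  rw [integral_div, integral_const_mul, int_vand n x hx]
  have : (Nat.factorial n : ℝ) ≠ 0 := by positivity
  field_simp
end

section
/- Entrance law for the non-colliding kernel: let n ≥ 1. For all s, t > 0 and all x' ∈ W^n, ∫_{W^n} Z_n^{−1} s^{−n²/2} exp(−Σ_i x_i²/(2s)) h_n(x) h_n(x') p^n_t(x,x') dx = μ^n_{t+s}(x'); equivalently, ∫_{W^n} μ^n_s(x) p^{n,+}_t(x,x') dx = μ^n_{t+s}(x'), where p^{n,+}_t(x,x') = (h_n(x')/h_n(x)) p^n_t(x,x'). -/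
open MeasureTheory Real

/-- The Karlin–McGregor kernel `p^m_t(x,x') = det{φ_t(x'_j − x_i)}`. -/
noncomputable def pKer (m : ℕ) (t : ℝ) (x x' : Fin m → ℝ) : ℝ :=
  Matrix.det (Matrix.of fun i j : Fin m => gauss t (x' j - x i))

/-- The normalising constant `Z_m = (2π)^{m/2} ∏_{j=1}^{m−1} j!`. -/
noncomputable def Zconst (m : ℕ) : ℝ :=
  (2 * Real.pi) ^ ((m : ℝ) / 2) * ∏ j ∈ Finset.range m, (Nat.factorial j : ℝ)

/-- The entrance law density `μ^n_t(y) = Z_n^{-1} t^{-n²/2} exp(−Σ_i y_i²/(2t)) h_n(y)²`. -/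
noncomputable def muLaw (n : ℕ) (t : ℝ) (y : Fin n → ℝ) : ℝ :=
  (Zconst n)⁻¹ * t ^ (-((n : ℝ) ^ 2) / 2) * Real.exp (-(∑ i, (y i) ^ 2) / (2 * t))
    * (vand n y) ^ 2

/-- The chamber `W^n = {x : x_1 ≤ … ≤ x_n}`. -/
def Wcham (n : ℕ) : Set (Fin n → ℝ) := {x | Monotone x}

open ProbabilityTheory in
lemma aux_poly (v : NNReal) (k : ℕ) : ∃ P : Polynomial ℝ, P.natDegree = k ∧ P.Monic ∧
    ∀ m : ℝ, ∫ x, x ^ k ∂(gaussianReal m v) = P.eval m := by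
  have hint : ∀ j : ℕ, Integrable (fun x : ℝ => x ^ j) (gaussianReal 0 v) := by
    intro j
    exact integrable_pow_of_mem_interior_integrableExpSet (X := id) (by simp) j
  set M : ℕ → ℝ := fun j => ∫ x, x ^ j ∂(gaussianReal 0 v) with hM
  set Q : Polynomial ℝ := ∑ i ∈ Finset.range k,
    Polynomial.C (M (k - i) * (k.choose i : ℝ)) * Polynomial.X ^ i with hQ
  have hdeg : Q.degree < (k : ℕ) := by
    rw [hQ]
    refine (Polynomial.degree_lt_iff_coeff_zero _ _).2 ?_
    intro m hm
    rw [Polynomial.finsetSum_coeff]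
    refine Finset.sum_eq_zero fun i hi => ?_
    rw [Polynomial.coeff_C_mul_X_pow, if_neg]
    have := Finset.mem_range.1 hi
    omega
  refine ⟨Polynomial.X ^ k + Q, ?_, Polynomial.monic_X_pow_add hdeg, ?_⟩
  · rw [Polynomial.natDegree_add_eq_left_of_degree_lt]
    · simp
    · simpa using hdeg
  · intro m
    have h1 : gaussianReal m v = (gaussianReal 0 v).map (· + m) := by
      rw [gaussianReal_map_add_const]; simp
    rw [h1, integral_map (by fun_prop) (by fun_prop)]
    have h2 : ∀ x : ℝ, (x + m) ^ k = ∑ i ∈ Finset.range (k + 1), m ^ i * x ^ (k - i) * (k.choose i : ℝ) := by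
      intro x; rw [add_comm, add_pow]
    simp_rw [h2]
    rw [integral_finsetSum _ (fun i _ => ((hint (k - i)).const_mul (m ^ i)).mul_const _)]
    simp_rw [integral_mul_const, integral_const_mul]
    rw [Finset.sum_range_succ, add_comm]
    simp only [Polynomial.eval_add, Polynomial.eval_pow, Polynomial.eval_X, hQ,
      Polynomial.eval_finsetSum, Polynomial.eval_mul, Polynomial.eval_C]
    congr 1
    · simp
    · refine Finset.sum_congr rfl fun i _ => ?_
      simp only [hM]; ring

open ProbabilityTheory in
lemma aux_int (m : ℝ) (v : NNReal) (hv : v ≠ 0) (k : ℕ) :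
    Integrable (fun x : ℝ => x ^ k * gaussianPDFReal m v x) := by
  have h : Integrable (fun x : ℝ => x ^ k) (gaussianReal m v) :=
    integrable_pow_of_mem_interior_integrableExpSet (X := id) (by simp) k
  rw [gaussianReal_of_var_ne_zero _ hv, integrable_withDensity_iff_integrable_smul'
    (measurable_gaussianPDF _ _) (by simp [gaussianPDF])] at h
  refine h.congr (Filter.Eventually.of_forall fun x => ?_)
  simp [gaussianPDF, ENNReal.toReal_ofReal (gaussianPDFReal_nonneg m v x), mul_comm]

open ProbabilityTheory in
lemma aux_gauss (s t : ℝ) (hs : 0 < s) (ht : 0 < t) (y x : ℝ) :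
    Real.exp (-x ^ 2 / (2 * s)) * gauss t (y - x) =
      √(s / (t + s)) * Real.exp (-y ^ 2 / (2 * (t + s))) *
       gaussianPDFReal (s / (t + s) * y) (Real.toNNReal (s * t / (t + s))) x := by
  unfold gauss gaussianPDFReal
  rw [Real.coe_toNNReal _ (by positivity)]
  have e1 : (√(2 * π * t))⁻¹ = √(s / (t + s)) * (√(2 * π * (s * t / (t + s))))⁻¹ := by
    rw [show 2 * π * (s * t / (t + s)) = s / (t + s) * (2 * π * t) by ring,
      Real.sqrt_mul (x := s / (t + s)) (by positivity), mul_inv, ← mul_assoc, mul_inv_cancel₀ (by positivity), one_mul]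
  have e2 : Real.exp (-x ^ 2 / (2 * s)) * Real.exp (-(y - x) ^ 2 / (2 * t)) =
      Real.exp (-y ^ 2 / (2 * (t + s))) *
        Real.exp (-(x - s / (t + s) * y) ^ 2 / (2 * (s * t / (t + s)))) := by
    rw [← Real.exp_add, ← Real.exp_add]
    congr 1
    field_simp
    ring
  rw [e1]
  linear_combination (√(s / (t + s)) * (√(2 * π * (s * t / (t + s))))⁻¹) * e2

lemma vand_eq (n : ℕ) (x : Fin n → ℝ) : vand n x = (Matrix.vandermonde x).det := by
  rw [Matrix.det_vandermonde, vand]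
  exact Finset.prod_comm' (by simp)

lemma vand_perm (n : ℕ) (x : Fin n → ℝ) (σ : Equiv.Perm (Fin n)) :
    vand n (x ∘ σ) = (Equiv.Perm.sign σ : ℤ) * vand n x := by
  rw [vand_eq, vand_eq, ← Matrix.det_permute]
  rfl

lemma vand_smul (n : ℕ) (c : ℝ) (x : Fin n → ℝ) :
    vand n (fun i => c * x i) = c ^ (n * (n - 1) / 2) * vand n x := by
  unfold vand
  simp_rw [← mul_sub, Finset.prod_mul_distrib, Finset.prod_const, Fin.card_Iio]
  rw [Finset.prod_pow_eq_pow_sum, Fin.sum_univ_eq_sum_range (fun i => i), Finset.sum_range_id]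

lemma ae_inj (n : ℕ) : ∀ᵐ x : Fin n → ℝ, Function.Injective x := by
  have : ∀ i j : Fin n, ∀ᵐ x : Fin n → ℝ, x i = x j → i = j := by
    intro i j
    by_cases hij : i = j
    · exact Filter.Eventually.of_forall fun _ _ => hij
    · have h := Measure.addHaar_submodule (volume : Measure (Fin n → ℝ))
        (LinearMap.ker ((LinearMap.proj i : (Fin n → ℝ) →ₗ[ℝ] ℝ) - LinearMap.proj j)) (by
          intro h
          have h1 : (Pi.single i 1 : Fin n → ℝ) ∈
            LinearMap.ker ((LinearMap.proj i : (Fin n → ℝ) →ₗ[ℝ] ℝ) - LinearMap.proj j) := by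
            rw [h]; trivial
          simp [Pi.single_apply, Ne.symm hij] at h1)
      have h2 := measure_eq_zero_iff_ae_notMem.1 h
      filter_upwards [h2] with x hx hxx
      exact absurd (by simp [hxx]) hx
  have h := ae_all_iff.2 fun i => ae_all_iff.2 (this i)
  filter_upwards [h] with x hx i j hij using hx i j hij

lemma meas_W (n : ℕ) : MeasurableSet (Wcham n) := by
  have : Wcham n = ⋂ i : Fin n, ⋂ j : Fin n, ⋂ _ : i ≤ j, {x | x i ≤ x j} := by
    ext x; simp [Wcham, Monotone]
  rw [this]
  refine MeasurableSet.iInter fun i => MeasurableSet.iInter fun j => MeasurableSet.iInter fun _ => ?_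
  exact measurableSet_le (measurable_pi_apply i) (measurable_pi_apply j)

lemma mp_perm (n : ℕ) (σ : Equiv.Perm (Fin n)) :
    MeasurePreserving (MeasurableEquiv.piCongrLeft (fun _ : Fin n => ℝ) σ.symm) volume volume :=
  volume_measurePreserving_piCongrLeft _ _

lemma perm_apply (n : ℕ) (σ : Equiv.Perm (Fin n)) (x : Fin n → ℝ) :
    MeasurableEquiv.piCongrLeft (fun _ : Fin n => ℝ) σ.symm x = x ∘ σ := by
  ext i
  have := Equiv.piCongrLeft_apply_apply (fun _ : Fin n => ℝ) σ.symm x (σ i)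
  rw [MeasurableEquiv.coe_piCongrLeft]
  simpa using this

lemma unfold_int (n : ℕ) (F : (Fin n → ℝ) → ℝ) (hF : Integrable F) :
    ∫ x in Wcham n, ∑ σ : Equiv.Perm (Fin n), F (x ∘ σ) = ∫ x, F x := by
  have hFs : ∀ σ : Equiv.Perm (Fin n), Integrable (fun x => F (x ∘ σ)) := by
    intro σ
    have := (mp_perm n σ).integrable_comp_of_integrable hF
    simpa only [Function.comp_def, perm_apply] using this
  rw [integral_finsetSum _ (fun σ _ => (hFs σ).integrableOn)]
  have h1 : ∀ σ : Equiv.Perm (Fin n), ∫ x in Wcham n, F (x ∘ σ) =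
      ∫ x, (Wcham n).indicator 1 (x ∘ σ.symm) * F x := by
    intro σ
    rw [← integral_indicator (meas_W n), ← (mp_perm n σ).integral_comp'
      (g := fun x => (Wcham n).indicator 1 (x ∘ σ.symm) * F x)]
    refine integral_congr_ae (Filter.Eventually.of_forall fun x => ?_)
    simp only [perm_apply]
    have : (x ∘ σ) ∘ σ.symm = x := by ext; simp
    rw [this]
    by_cases hx : x ∈ Wcham n <;> simp [hx]
  simp_rw [h1]
  rw [← integral_finsetSum]
  · refine integral_congr_ae ?_
    filter_upwards [ae_inj n] with x hx
    rw [← Finset.sum_mul, Finset.sum_eq_single (Tuple.sort x).symm]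
    · have : x ∘ (Tuple.sort x).symm.symm ∈ Wcham n := Tuple.monotone_sort x
      rw [Set.indicator_of_mem this]; simp
    · intro σ _ hσ
      refine Set.indicator_of_notMem (fun h => hσ ?_) _
      have h2 := Tuple.unique_monotone (f := x) h (Tuple.monotone_sort x)
      have h3 : σ.symm = Tuple.sort x := by
        ext i; exact congrArg _ (hx (congrFun h2 i))
      rw [← h3]; simp
    · simp
  · intro σ _
    have hm : Measurable (fun x : Fin n → ℝ => (Wcham n).indicator (1 : (Fin n → ℝ) → ℝ) (x ∘ σ.symm)) :=
      (measurable_one.indicator (meas_W n)).comp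
        (measurable_pi_lambda _ fun i => measurable_pi_apply _)
    refine hF.bdd_mul (c := 1) hm.aestronglyMeasurable (Filter.Eventually.of_forall fun x => ?_)
    by_cases hx : x ∘ σ.symm ∈ Wcham n <;> simp [hx]

lemma det_int (n : ℕ) (g : Fin n → ℝ → ℝ) (hg : ∀ i (k : ℕ), Integrable (fun x => x ^ k * g i x)) :
    Integrable (fun x : Fin n → ℝ => vand n x * ∏ i, g i (x i)) ∧
    ∫ x : Fin n → ℝ, vand n x * ∏ i, g i (x i) =
      (Matrix.of fun i j : Fin n => ∫ x, x ^ (j : ℕ) * g i x).det := by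
  have h : (fun x : Fin n → ℝ => vand n x * ∏ i, g i (x i)) = fun x => 
      ∑ σ : Equiv.Perm (Fin n), ((Equiv.Perm.sign σ : ℤ) : ℝ) *
        ∏ i, (x i ^ (σ i : ℕ) * g i (x i)) := by
    ext x
    rw [vand_eq, ← Matrix.det_transpose, Matrix.det_apply', Finset.sum_mul]
    refine Finset.sum_congr rfl fun σ _ => ?_
    rw [Finset.prod_mul_distrib]
    simp [Matrix.vandermonde_apply, mul_assoc]
  have hi : ∀ σ : Equiv.Perm (Fin n), Integrable (fun x : Fin n → ℝ =>
      ((Equiv.Perm.sign σ : ℤ) : ℝ) * ∏ i, (x i ^ (σ i : ℕ) * g i (x i))) := by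
    intro σ
    refine Integrable.const_mul ?_ _
    exact Integrable.fintype_prod (f := fun i x => x ^ (σ i : ℕ) * g i x)
      (μ := fun _ => volume) (fun i => hg i _)
  constructor
  · rw [h]; exact integrable_finsetSum _ fun σ _ => hi σ
  · rw [h, integral_finsetSum _ fun σ _ => hi σ, ← Matrix.det_transpose, Matrix.det_apply']
    refine Finset.sum_congr rfl fun σ _ => ?_
    rw [integral_const_mul,
      integral_fintype_prod_volume_eq_prod (fun i x => x ^ (σ i : ℕ) * g i x)]
    simp

open ProbabilityTheory in
lemma key (n : ℕ) (s t : ℝ) (hs : 0 < s) (ht : 0 < t) (x' : Fin n → ℝ) :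
    ∫ x in Wcham n, Real.exp (-(∑ i, (x i) ^ 2) / (2 * s)) * vand n x * pKer n t x x' =
    √(s / (t + s)) ^ n * Real.exp (-(∑ i, (x' i) ^ 2) / (2 * (t + s))) *
      ((s / (t + s)) ^ (n * (n - 1) / 2) * vand n x') := by
  set v := Real.toNNReal (s * t / (t + s)) with hv
  have hv0 : v ≠ 0 := by
    have : 0 < v := Real.toNNReal_pos.2 (by positivity)
    exact this.ne'
  set g : Fin n → ℝ → ℝ := fun i x => Real.exp (-x ^ 2 / (2 * s)) * gauss t (x' i - x) with hg
  have hg' : ∀ i x, g i x = √(s / (t + s)) * Real.exp (-(x' i) ^ 2 / (2 * (t + s))) *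
       gaussianPDFReal (s / (t + s) * x' i) v x := fun i x => aux_gauss s t hs ht _ _
  have hgi : ∀ i (k : ℕ), Integrable (fun x => x ^ k * g i x) := by
    intro i k
    refine ((aux_int (s / (t + s) * x' i) v hv0 k).const_mul
      (√(s / (t + s)) * Real.exp (-(x' i) ^ 2 / (2 * (t + s))))).congr
      (Filter.Eventually.of_forall fun x => ?_)
    simp only [hg']; ring
  obtain ⟨h1, h2⟩ := det_int n g hgi
  have h3 : ∀ x : Fin n → ℝ,
      Real.exp (-(∑ i, (x i) ^ 2) / (2 * s)) * vand n x * pKer n t x x' =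
      ∑ σ : Equiv.Perm (Fin n), (fun x : Fin n → ℝ => vand n x * ∏ i, g i (x i)) (x ∘ σ) := by
    intro x
    rw [pKer, Matrix.det_apply', Finset.mul_sum]
    refine Finset.sum_congr rfl fun σ _ => ?_
    simp only [vand_perm, hg, Function.comp_apply, Finset.prod_mul_distrib, Matrix.of_apply]
    have : ∏ i, Real.exp (-(x (σ i)) ^ 2 / (2 * s)) = Real.exp (-(∑ i, (x i) ^ 2) / (2 * s)) := by
      rw [Equiv.prod_comp σ (fun i => Real.exp (-(x i) ^ 2 / (2 * s))), ← Real.exp_sum,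
        ← Finset.sum_div, Finset.sum_neg_distrib]
    rw [this]; ring
  simp_rw [h3]
  rw [unfold_int n _ h1, h2]
  choose P hP1 hP2 hP3 using aux_poly v
  have h4 : ∀ i (k : ℕ), ∫ x, x ^ k * g i x = (√(s / (t + s)) * Real.exp (-(x' i) ^ 2 / (2 * (t + s)))) *
      (P k).eval (s / (t + s) * x' i) := by
    intro i k
    rw [← hP3, integral_gaussianReal_eq_integral_smul hv0, ← integral_const_mul]
    refine integral_congr_ae (Filter.Eventually.of_forall fun x => ?_)
    simp only [hg', smul_eq_mul]; ring
  simp_rw [h4]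
  refine (Matrix.det_mul_column (fun i => √(s / (t + s)) * Real.exp (-(x' i) ^ 2 / (2 * (t + s))))
    (Matrix.of fun i j : Fin n => (P j).eval (s / (t + s) * x' i))).trans ?_
  rw [← Matrix.det_eval_matrixOfPolynomials_eq_det_vandermonde (fun i => s / (t + s) * x' i)
    (fun j => P j) (fun i => hP1 _) (fun i => hP2 _), ← vand_eq, vand_smul]
  congr 1
  rw [Finset.prod_mul_distrib, ← Real.exp_sum, ← Finset.sum_div, Finset.sum_neg_distrib]
  simp

theorem stmt10 (n : ℕ) (hn : 1 ≤ n) (s t : ℝ) (hs : 0 < s) (ht : 0 < t)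
    (x' : Fin n → ℝ) (hx' : x' ∈ Wcham n) :
    ∫ x in Wcham n,
        (Zconst n)⁻¹ * s ^ (-((n : ℝ) ^ 2) / 2) * Real.exp (-(∑ i, (x i) ^ 2) / (2 * s))
          * vand n x * vand n x' * pKer n t x x'
      = muLaw n (t + s) x' := by
  have h : ∀ x : Fin n → ℝ, (Zconst n)⁻¹ * s ^ (-((n : ℝ) ^ 2) / 2) *
      Real.exp (-(∑ i, (x i) ^ 2) / (2 * s)) * vand n x * vand n x' * pKer n t x x' =
      ((Zconst n)⁻¹ * s ^ (-((n : ℝ) ^ 2) / 2) * vand n x') *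
      (Real.exp (-(∑ i, (x i) ^ 2) / (2 * s)) * vand n x * pKer n t x x') := by
    intro x; ring
  simp_rw [h]
  rw [integral_const_mul, key n s t hs ht, muLaw]
  have hc : s ^ (-((n : ℝ) ^ 2) / 2) * (√(s / (t + s)) ^ n * (s / (t + s)) ^ (n * (n - 1) / 2)) =
      (t + s) ^ (-((n : ℝ) ^ 2) / 2) := by
    have hr : 0 < s / (t + s) := by positivity
    have h2 : (2 : ℝ) * ((n * (n - 1) / 2 : ℕ) : ℝ) = n * (n - 1) := by
      have : 2 * (n * (n - 1) / 2) = n * (n - 1) :=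
        Nat.mul_div_cancel' (Nat.even_mul_pred_self n).two_dvd
      rw [← Nat.cast_two, ← Nat.cast_mul, this, Nat.cast_mul, Nat.cast_sub hn, Nat.cast_one]
    have e : √(s / (t + s)) ^ n * (s / (t + s)) ^ (n * (n - 1) / 2) =
        (s / (t + s)) ^ ((n : ℝ) ^ 2 / 2) := by
      rw [Real.sqrt_eq_rpow, ← Real.rpow_natCast, ← Real.rpow_natCast, ← Real.rpow_mul hr.le,
        ← Real.rpow_add hr]
      congr 1
      linear_combination h2 / 2
    rw [e, Real.div_rpow hs.le (by positivity), neg_div, Real.rpow_neg hs.le,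
      Real.rpow_neg (by positivity)]
    have := Real.rpow_pos_of_pos hs ((n : ℝ) ^ 2 / 2)
    field_simp
  rw [← hc]
  ring
end

section
/- Iterated Skorokhod reflection gives the last-passage functional: let γ^1, …, γ^n : [0,∞) → ℝ be continuous functions with γ^k(0) = 0 for each k. Define X^1(t) = γ^1(t) and, recursively for k = 2, …, n, X^k(t) = γ^k(t) + sup_{0 ≤ s ≤ t} (X^{k−1}(s) − γ^k(s)). Then for every t ≥ 0, X^n(t) = sup over all chains 0 = t_0 ≤ t_1 ≤ … ≤ t_n = t of Σ_{i=1}^n (γ^i(t_i) − γ^i(t_{i−1})). -/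
theorem stmt14_aux (n : ℕ) (γ : ℕ → ℝ → ℝ)
    (hγc : ∀ k, Continuous (γ k)) (hγ0 : ∀ k, γ k 0 = 0)
    (X : ℕ → ℝ → ℝ)
    (hX1 : ∀ t, X 1 t = γ 1 t)
    (hXrec : ∀ k, 2 ≤ k → k ≤ n → ∀ t : ℝ, 0 ≤ t →
      X k t = γ k t + sSup ((fun s => X (k - 1) s - γ k s) '' Set.Icc 0 t))
    (k : ℕ) (hk : 1 ≤ k) : k ≤ n →
    (∀ t : ℝ, 0 ≤ t →
      IsLUB {v : ℝ | ∃ τ : Fin (k + 1) → ℝ,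
        Monotone τ ∧ τ 0 = 0 ∧ τ (Fin.last k) = t ∧
        v = ∑ i : Fin k, (γ ((i : ℕ) + 1) (τ i.succ) - γ ((i : ℕ) + 1) (τ i.castSucc))} (X k t)) ∧
    (∀ T : ℝ, ∃ M : ℝ, ∀ s ∈ Set.Icc 0 T, X k s ≤ M) := by
  have bd : ∀ k T, ∃ M : ℝ, ∀ s ∈ Set.Icc 0 T, |γ k s| ≤ M := by
    intro k T
    obtain ⟨M, hM⟩ := (isCompact_Icc (a := (0:ℝ)) (b := T)).exists_bound_of_continuousOn
      (hγc k).continuousOn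
    exact ⟨M, fun s hs => by simpa using hM s hs⟩
  induction k, hk using Nat.le_induction with
  | base =>
    intro _
    refine ⟨fun t ht => ⟨?_, ?_⟩, fun T => ?_⟩
    · rintro v ⟨τ, hm, h0, hl, rfl⟩
      have hl' : τ 1 = t := hl
      simp [h0, hl', hγ0, hX1]
    · intro b hb
      apply hb
      refine ⟨![0, t], ?_, rfl, rfl, ?_⟩
      · intro i j hij
        fin_cases i <;> fin_cases j <;> simp_all
      · simp [hγ0, hX1]
    · obtain ⟨M, hM⟩ := bd 1 T
      exact ⟨M, fun s hs => by rw [hX1]; exact (le_abs_self _).trans (hM s hs)⟩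
  | succ k hk ih =>
    intro hkn
    obtain ⟨ih1, ih2⟩ := ih (by omega)
    have hrec : ∀ t : ℝ, 0 ≤ t →
      X (k+1) t = γ (k+1) t + sSup ((fun s => X k s - γ (k+1) s) '' Set.Icc 0 t) := by
      intro t ht
      have := hXrec (k+1) (by omega) hkn t ht
      simpa using this
    have hB : ∀ T : ℝ, ∃ M : ℝ, ∀ s ∈ Set.Icc 0 T, X k s - γ (k+1) s ≤ M := by
      intro T
      obtain ⟨M, hM⟩ := ih2 T
      obtain ⟨C, hC⟩ := bd (k+1) T
      refine ⟨M + C, fun s hs => ?_⟩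
      have := hM s hs
      have := neg_le_of_abs_le (hC s hs)
      linarith
    have hne : ∀ t : ℝ, 0 ≤ t → ((fun s => X k s - γ (k+1) s) '' Set.Icc 0 t).Nonempty :=
      fun t ht => ⟨_, 0, ⟨le_rfl, ht⟩, rfl⟩
    refine ⟨fun t ht => ⟨?_, ?_⟩, fun T => ?_⟩
    · rintro v ⟨τ, hm, h0, hl, rfl⟩
      rw [Fin.sum_univ_castSucc, hrec t ht]
      have hs0 : 0 ≤ τ (Fin.last k).castSucc := by
        rw [← h0]; exact hm (Fin.zero_le _)
      have hst : τ (Fin.last k).castSucc ≤ t := by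
        rw [← hl]; exact hm (Fin.le_last _)
      have h1 := (ih1 _ hs0).1 ⟨fun i => τ i.castSucc,
        fun i j hij => hm (Fin.castSucc_le_castSucc_iff.2 hij), by simpa using h0, rfl, rfl⟩
      have h2 : X k (τ (Fin.last k).castSucc) - γ (k+1) (τ (Fin.last k).castSucc) ≤
          sSup ((fun s => X k s - γ (k+1) s) '' Set.Icc 0 t) := by
        apply le_csSup
        · obtain ⟨M, hM⟩ := hB t
          exact ⟨M, by rintro _ ⟨s, hs, rfl⟩; exact hM s hs⟩
        · exact ⟨_, ⟨hs0, hst⟩, rfl⟩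
      simp only [Fin.val_castSucc, Fin.val_last, Fin.succ_last, Fin.succ_castSucc, hl] at h1 h2 ⊢
      linarith
    · intro b hb
      rw [hrec t ht]
      have : sSup ((fun s => X k s - γ (k+1) s) '' Set.Icc 0 t) ≤ b - γ (k+1) t := by
        apply csSup_le (hne t ht)
        rintro _ ⟨s, hs, rfl⟩
        have : X k s ≤ b - γ (k+1) t + γ (k+1) s := by
          apply (ih1 s hs.1).2
          rintro v ⟨τ, hm, h0, hl, rfl⟩
          have h3 := hb ⟨Fin.snoc (α := fun _ => ℝ) τ t, ?_, ?_, ?_, rfl⟩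
          · rw [Fin.sum_univ_castSucc] at h3
            simp only [Fin.val_castSucc, Fin.val_last, Fin.succ_last, Fin.succ_castSucc,
              Fin.snoc_castSucc, Fin.snoc_last, hl] at h3
            linarith
          · intro i j hij
            induction j using Fin.lastCases with
            | last =>
              induction i using Fin.lastCases with
              | last => exact le_rfl
              | cast i =>
                simp only [Fin.snoc_castSucc, Fin.snoc_last]
                exact (hm (Fin.le_last i)).trans (hl.le.trans hs.2)
            | cast j =>
              induction i using Fin.lastCases with
              | last => exact absurd hij (not_le.2 (Fin.castSucc_lt_last j))
              | cast i =>
                simp only [Fin.snoc_castSucc]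
                exact hm (Fin.castSucc_le_castSucc_iff.1 hij)
          · rw [← Fin.castSucc_zero, Fin.snoc_castSucc]; exact h0
          · exact Fin.snoc_last (α := fun _ => ℝ) _ _
        show X k s - γ (k+1) s ≤ _
        linarith
      linarith
    · obtain ⟨M, hM⟩ := hB T
      obtain ⟨C, hC⟩ := bd (k+1) T
      refine ⟨C + M, fun t ht => ?_⟩
      rw [hrec t ht.1]
      refine add_le_add ((le_abs_self _).trans (hC t ht)) (csSup_le (hne t ht.1) ?_)
      rintro _ ⟨s, hs, rfl⟩
      exact hM s ⟨hs.1, hs.2.trans ht.2⟩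

/-- Iterated Skorokhod reflection gives the last-passage functional: if
`X^1 = γ^1` and `X^k(t) = γ^k(t) + sup_{0 ≤ s ≤ t} (X^{k−1}(s) − γ^k(s))` for
`2 ≤ k ≤ n`, then
`X^n(t) = sup_{0 = t_0 ≤ t_1 ≤ … ≤ t_n = t} Σ_{i=1}^n (γ^i(t_i) − γ^i(t_{i−1}))`. -/
theorem stmt14 (n : ℕ) (hn : 1 ≤ n) (γ : ℕ → ℝ → ℝ)
    (hγc : ∀ k, Continuous (γ k)) (hγ0 : ∀ k, γ k 0 = 0)
    (X : ℕ → ℝ → ℝ)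
    (hX1 : ∀ t, X 1 t = γ 1 t)
    (hXrec : ∀ k, 2 ≤ k → k ≤ n → ∀ t : ℝ, 0 ≤ t →
      X k t = γ k t + sSup ((fun s => X (k - 1) s - γ k s) '' Set.Icc 0 t)) :
    ∀ t : ℝ, 0 ≤ t →
      X n t = sSup {v : ℝ | ∃ τ : Fin (n + 1) → ℝ,
        Monotone τ ∧ τ 0 = 0 ∧ τ (Fin.last n) = t ∧
        v = ∑ i : Fin n, (γ ((i : ℕ) + 1) (τ i.succ) - γ ((i : ℕ) + 1) (τ i.castSucc))} := by
  intro t ht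
  have h := (stmt14_aux n γ hγc hγ0 X hX1 hXrec n hn le_rfl).1 t ht
  have hne : ({v : ℝ | ∃ τ : Fin (n + 1) → ℝ,
        Monotone τ ∧ τ 0 = 0 ∧ τ (Fin.last n) = t ∧
        v = ∑ i : Fin n, (γ ((i : ℕ) + 1) (τ i.succ) -
          γ ((i : ℕ) + 1) (τ i.castSucc))}).Nonempty := by
    by_contra hc
    rw [Set.not_nonempty_iff_eq_empty] at hc
    rw [hc] at h
    have := h.2 (show X n t - 1 ∈ upperBounds ∅ by simp)
    linarith
  exact (h.csSup_eq hne).symm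
end

section
/- Let n ≥ 1 and let z, z' ∈ W^n. The determinant of the n×n real matrix M with entries M_{ij} = 1{z_i ≤ z'_j} equals the indicator of strict interlacing: det M = 1 if z_1 ≤ z'_1 < z_2 ≤ z'_2 < … < z_{n−1} ≤ z'_{n−1} < z_n ≤ z'_n, and det M = 0 otherwise. -/
open Classical in
/-- For `z, z' ∈ W^n`, `det{1{z_i ≤ z'_j}}` equals the indicator of the strict
interlacing `z_1 ≤ z'_1 < z_2 ≤ z'_2 < … < z_{n−1} ≤ z'_{n−1} < z_n ≤ z'_n`. -/
theorem stmt15 (n : ℕ) (hn : 1 ≤ n) (z z' : Fin n → ℝ)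
    (hz : Monotone z) (hz' : Monotone z') :
    Matrix.det (Matrix.of fun i j : Fin n => if z i ≤ z' j then (1 : ℝ) else 0)
      = if (∀ i : Fin n, z i ≤ z' i) ∧
           (∀ (i : ℕ) (h : i + 1 < n), z' ⟨i, by omega⟩ < z ⟨i + 1, h⟩)
        then 1 else 0 := by
  split_ifs with H
  · obtain ⟨h1, h2⟩ := H
    rw [Matrix.det_of_upperTriangular]
    · apply Finset.prod_eq_one
      intro i _
      simp [h1 i]
    · intro i j hij
      have hij' : j < i := hij
      have hlt : j.val + 1 < n := by omega
      have h3 := h2 j.val hlt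
      have h4 : z ⟨j.val + 1, hlt⟩ ≤ z i := hz (by simp only [Fin.le_def]; omega)
      have h5 : ¬ z i ≤ z' j := not_le.mpr (lt_of_lt_of_le h3 h4)
      simp [h5]
  · by_contra hdet
    apply H
    have hrow : ∀ (i : ℕ) (h : i + 1 < n),
        ∃ j, z ⟨i, by omega⟩ ≤ z' j ∧ z' j < z ⟨i + 1, h⟩ := by
      intro i h
      by_contra! hc
      apply hdet
      have hne : (⟨i, by omega⟩ : Fin n) ≠ ⟨i + 1, h⟩ := by simp
      apply Matrix.det_zero_of_row_eq hne
      funext j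
      have hle : z ⟨i, by omega⟩ ≤ z ⟨i + 1, h⟩ := hz (by simp [Fin.le_def])
      have : z ⟨i, by omega⟩ ≤ z' j ↔ z ⟨i + 1, h⟩ ≤ z' j :=
        ⟨hc j, fun h' => hle.trans h'⟩
      simp [this]
    have hlast : ∃ j, z ⟨n - 1, by omega⟩ ≤ z' j := by
      by_contra! hc
      apply hdet
      apply Matrix.det_eq_zero_of_row_eq_zero ⟨n - 1, by omega⟩
      intro j
      simp [hc j]
    constructor
    · have key : ∀ (k i : ℕ) (h : i + k + 1 = n), z ⟨i, by omega⟩ ≤ z' ⟨i, by omega⟩ := by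
        intro k
        induction k with
        | zero =>
          intro i h
          obtain ⟨j, hj⟩ := hlast
          have e : (⟨n - 1, by omega⟩ : Fin n) = ⟨i, by omega⟩ := by
            apply Fin.ext; simp only []; omega
          rw [e] at hj
          exact hj.trans (hz' (by simp only [Fin.le_def]; omega))
        | succ k ih =>
          intro i h
          have h1 := ih (i + 1) (by omega)
          obtain ⟨j, hj1, hj2⟩ := hrow i (by omega)
          have : j < ⟨i + 1, by omega⟩ := hz'.reflect_lt (lt_of_lt_of_le hj2 h1)
          exact hj1.trans (hz' (by simp only [Fin.le_def, Fin.lt_def] at *; omega))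
      intro i
      exact key (n - 1 - i.val) i.val (by omega)
    · intro i
      induction i with
      | zero =>
        intro h
        obtain ⟨j, hj1, hj2⟩ := hrow 0 h
        exact lt_of_le_of_lt (hz' (by simp [Fin.le_def])) hj2
      | succ i ih =>
        intro h
        have h1 := ih (by omega)
        obtain ⟨j, hj1, hj2⟩ := hrow (i + 1) h
        have : ⟨i, by omega⟩ < j := hz'.reflect_lt (lt_of_lt_of_le h1 hj1)
        exact lt_of_le_of_lt (hz' (by simp only [Fin.le_def, Fin.lt_def] at *; omega)) hj2
end

section
/- Let n ≥ 1 and let z, z' ∈ W^n. The determinant of the n×n real matrix N with entries N_{ij} = 1{z_i ≤ z'_j} for i ≥ j and N_{ij} = −1{z'_j < z_i} for i < j equals the indicator of coordinatewise domination: det N = 1 if z_i ≤ z'_i for all i ∈ {1,…,n}, and det N = 0 otherwise. -/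
/-- For `z, z' ∈ W^n`, the determinant of the matrix with entries `1{z_i ≤ z'_j}` on and
below the diagonal (`i ≥ j`) and `−1{z'_j < z_i}` above it (`i < j`) equals the indicator
of the coordinatewise domination `z_i ≤ z'_i` for all `i`. -/
theorem stmt16 (n : ℕ) (hn : 1 ≤ n) (z z' : Fin n → ℝ)
    (hz : Monotone z) (hz' : Monotone z') :
    Matrix.det (Matrix.of fun i j : Fin n =>
        if (j : ℕ) ≤ (i : ℕ) then (if z i ≤ z' j then (1 : ℝ) else 0)
        else (if z' j < z i then (-1 : ℝ) else 0))
      = if ∀ i : Fin n, z i ≤ z' i then 1 else 0 := by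
  split_ifs with h
  · rw [Matrix.det_of_lowerTriangular]
    · apply Finset.prod_eq_one
      intro i _
      simp [h i]
    · intro i j hij
      have hij' : i < j := hij
      have h1 : ¬ ((j : ℕ) ≤ (i : ℕ)) := by
        have : (i : ℕ) < (j : ℕ) := hij'
        omega
      have h2 : ¬ (z' j < z i) := not_lt.mpr ((hz hij'.le).trans (h j))
      simp only [Matrix.of_apply, if_neg h1, if_neg h2]
  · push Not at h
    obtain ⟨k, hk⟩ := h
    rw [Matrix.det_apply]
    apply Finset.sum_eq_zero
    intro σ _
    have key : ∃ j : Fin n, j ≤ k ∧ k ≤ σ j := by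
      by_contra hcon
      push Not at hcon
      have hc := Finset.card_le_card_of_injOn (s := Finset.Iic k) (t := Finset.Iio k) σ
        (fun j hj => by
          have hj' : j ≤ k := by simpa using hj
          simpa using hcon j hj')
        (σ.injective.injOn)
      simp at hc
    obtain ⟨j, hj, hkj⟩ := key
    have h1 : (j : ℕ) ≤ (σ j : ℕ) := hj.trans hkj
    have h2 : ¬ (z (σ j) ≤ z' j) :=
      not_le.mpr (((hz' hj).trans_lt hk).trans_le (hz hkj))
    rw [Finset.prod_eq_zero (Finset.mem_univ j), smul_zero]
    simp only [Matrix.of_apply, if_pos h1, if_neg h2]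
end
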